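/- Let w be a Kreweras word of length 3n. Then evac(w) = (w_{σ_w(3n)}, w_{σ_w(3n−1)}, …, w_{σ_w(1)}), i.e., for every i ∈ {1,…,3n}, the letter of evac(w) in position i equals w_{σ_w(3n+1−i)}. -/

import Mathlib

/-- The three letters of a Kreweras word. -/
inductive KLetter : Type
  | A | B | C
deriving DecidableEq, Repr

open KLetter

/-- `w` is a Kreweras word of length `3 * n`: it has `n` `A`'s, `n` `B`'s, `n` `C`'s,
and every prefix has at least as many `A`'s as `B`'s and at least as many `A`'s as `C`'s. -/
def IsKrewerasWord (n : ℕ) (w : List KLetter) : Prop :=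
  w.length = 3 * n ∧ w.count A = n ∧ w.count B = n ∧ w.count C = n ∧
  ∀ k : ℕ, (w.take k).count B ≤ (w.take k).count A ∧
           (w.take k).count C ≤ (w.take k).count A

/-- `kiota w` is the smallest index `ι ≥ 1` (1-indexed) such that the prefix of
length `ι` of `w` has equally many `A`'s as `B`'s, or equally many `A`'s as `C`'s
(and `0` if no such index exists). -/
def kiota (w : List KLetter) : ℕ :=
  (((List.range (w.length + 1)).filter fun k =>
      decide (1 ≤ k) &&
      (((w.take k).count A == (w.take k).count B) ||
       ((w.take k).count A == (w.take k).count C))).headD 0)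

/-- Promotion of a Kreweras word:
`pro w = (w₂, …, w_{ι-1}, A, w_{ι+1}, …, w_{3n}, w_ι)` where `ι = kiota w`. -/
def pro (w : List KLetter) : List KLetter :=
  ((w.drop 1).set (kiota w - 2) A) ++ [w.getD (kiota w - 1) A]

/-- The trip permutation `σ_w` of a Kreweras word of length `3 * n`, as a function on
1-indexed positions: `σ_w i` is the unique element of `{1, …, 3n}` congruent to
`kiota (pro^[i-1] w) + i - 1` modulo `3 * n`. -/
def ksigma (n : ℕ) (w : List KLetter) (i : ℕ) : ℕ :=
  (kiota (pro^[i - 1] w) + i - 2) % (3 * n) + 1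

/-- `keps w i` is the letter of `pro^[i-1] w` in (1-indexed) position `kiota (pro^[i-1] w)`. -/
def keps (w : List KLetter) (i : ℕ) : KLetter :=
  (pro^[i - 1] w).getD (kiota (pro^[i - 1] w) - 1) A

/-- The negation swapping `B` and `C` (and fixing `A`). -/
def negL : KLetter → KLetter
  | A => A
  | B => C
  | C => B

open Classical in
/-- The involution `τ_i` on Kreweras words of length `3 * n`: swap the letters in
(1-indexed) positions `i` and `i + 1` if the result is again a Kreweras word,
and otherwise do nothing. -/
noncomputable def tau (n i : ℕ) (w : List KLetter) : List KLetter :=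
  let w' := (w.set (i - 1) (w.getD i A)).set i (w.getD (i - 1) A)
  if IsKrewerasWord n w' then w' else w

/-- `tauDown n j = τ_j ∘ τ_{j-1} ∘ ⋯ ∘ τ_1`. -/
noncomputable def tauDown (n : ℕ) : ℕ → List KLetter → List KLetter
  | 0, w => w
  | j + 1, w => tau n (j + 1) (tauDown n j w)

/-- `evacAux n j = (tauDown n 1) ∘ (tauDown n 2) ∘ ⋯ ∘ (tauDown n j)`. -/
noncomputable def evacAux (n : ℕ) : ℕ → List KLetter → List KLetter
  | 0, w => w
  | j + 1, w => evacAux n j (tauDown n (j + 1) w)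

/-- Evacuation on Kreweras words of length `3 * n`:
`evac = (τ_1) ∘ (τ_2 ∘ τ_1) ∘ ⋯ ∘ (τ_{3n-1} ∘ ⋯ ∘ τ_2 ∘ τ_1)`. -/
noncomputable def evac (n : ℕ) (w : List KLetter) : List KLetter :=
  evacAux n (3 * n - 1) w

/-- `tauAsc n k c = τ_{k+c-1} ∘ ⋯ ∘ τ_{k+1} ∘ τ_k`. -/
noncomputable def tauAsc (n k : ℕ) : ℕ → List KLetter → List KLetter
  | 0, w => w
  | j + 1, w => tau n (k + j) (tauAsc n k j w)

/-- `evacStarAux n j = (tauAsc n 1 (3n-1)) ∘ (tauAsc n 2 (3n-2)) ∘ ⋯ ∘ (tauAsc n j (3n-j))`. -/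
noncomputable def evacStarAux (n : ℕ) : ℕ → List KLetter → List KLetter
  | 0, w => w
  | j + 1, w => evacStarAux n j (tauAsc n (j + 1) (3 * n - (j + 1)) w)

/-- Dual evacuation on Kreweras words of length `3 * n`:
`evac* = (τ_{3n-1} ∘ ⋯ ∘ τ_1) ∘ (τ_{3n-1} ∘ ⋯ ∘ τ_2) ∘ ⋯ ∘ (τ_{3n-1})`. -/
noncomputable def evacStar (n : ℕ) (w : List KLetter) : List KLetter :=
  evacStarAux n (3 * n - 1) w

/-- The three-element "V"-shaped poset: `a < b`, `a < c`, with `b`, `c` incomparable. -/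
inductive VP : Type
  | a | b | c
deriving DecidableEq

instance : PartialOrder VP where
  le x y := x = y ∨ x = VP.a
  le_refl x := Or.inl rfl
  le_trans x y z hxy hyz := by
    rcases hxy with rfl | rfl
    · exact hyz
    · exact Or.inr rfl
  le_antisymm x y hxy hyx := by
    rcases hxy with rfl | rfl
    · rfl
    · rcases hyx with rfl | rfl <;> rfl

/-- The labeling of elements of `V(n) = VP × Fin n` by letters. -/
def vlabel {n : ℕ} (p : VP × Fin n) : KLetter :=
  match p.1 with
  | VP.a => A
  | VP.b => B
  | VP.c => C

/-- `L` is a linear extension of `V(n) = VP × Fin n` (with the product order):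
a list of all elements of `V(n)`, each appearing once, such that `L_i ≤ L_j`
implies `i ≤ j`. -/
def IsLinearExtension (n : ℕ) (L : List (VP × Fin n)) : Prop :=
  L.Nodup ∧ (∀ p : VP × Fin n, p ∈ L) ∧
  ∀ i j : Fin L.length, L.get i ≤ L.get j → (i : ℕ) ≤ (j : ℕ)

/-- A connected Kreweras word: a Kreweras word of length `3 * n` having no proper
nonempty consecutive substring which is itself a Kreweras word. -/
def ConnectedKrewerasWord (n : ℕ) (w : List KLetter) : Prop :=
  IsKrewerasWord n w ∧
  ∀ (u : List KLetter) (m : ℕ), u <:+: w → u ≠ [] → u ≠ w → ¬ IsKrewerasWord m u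


namespace KWP

/-- The kind of a letter relative to the stack it meets. -/
inductive Kd : Type
  | push | res (d : ℕ) | del (d : ℕ)

/-- States of a trip: forward / backward over a gap at a stack index, start, end. -/
inductive St : Type
  | F (j i : ℕ) | K (j i : ℕ) | S (p : ℕ) | E (p : ℕ)

open Kd St

/-- One step of a trip. -/
def next (κ : ℕ → Kd) : St → St
  | F j i => match κ j with
    | push => F (j+1) (i+1)
    | res d => if i < d then F (j+1) (i+1) else if i = d then E j else F (j+1) i
    | del d => if i + 1 < d then F (j+1) (i+1) else if i + 1 = d then K j d
        else if i = d then E j else F (j+1) (i-1)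
  | K 0 i => K 0 i
  | K (j+1) i => match κ j with
    | push => if i = 0 then E j else K j (i-1)
    | res _ => K j i
    | del d => if i < d then K j i else K j (i+1)
  | S p => match κ p with
    | push => F (p+1) 0
    | res _ => F (p+1) 0
    | del d => if d = 0 then K p 0 else F (p+1) 0
  | E p => E p

def Reach (κ : ℕ → Kd) (s t : St) : Prop := ∃ m, (next κ)^[m] s = t

theorem Reach.refl (κ : ℕ → Kd) (s : St) : Reach κ s s := ⟨0, rfl⟩

theorem Reach.step (κ : ℕ → Kd) (s : St) : Reach κ s (next κ s) := ⟨1, rfl⟩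

theorem Reach.trans {κ : ℕ → Kd} {s t u : St} (h : Reach κ s t) (h' : Reach κ t u) :
    Reach κ s u := by
  obtain ⟨m, rfl⟩ := h
  obtain ⟨m', rfl⟩ := h'
  exact ⟨m' + m, by rw [Function.iterate_add_apply]⟩

theorem iter_E (κ : ℕ → Kd) (p m : ℕ) : (next κ)^[m] (E p) = E p := by
  induction m with
  | zero => rfl
  | succ m ih => rw [Function.iterate_succ_apply]; exact ih

theorem Reach.det {κ : ℕ → Kd} {s : St} {p q : ℕ} (h : Reach κ s (E p))
    (h' : Reach κ s (E q)) : p = q := by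
  obtain ⟨m, hm⟩ := h
  obtain ⟨m', hm'⟩ := h'
  have h1 : (next κ)^[m' + m] s = E p := by
    rw [Function.iterate_add_apply, hm, iter_E]
  have h2 : (next κ)^[m' + m] s = E q := by
    rw [Nat.add_comm, Function.iterate_add_apply, hm', iter_E]
  rw [h1] at h2
  exact St.E.inj h2

/-- Comparison phase of the two stacks. -/
inductive Ph : Type
  | p0 (s : ℕ) | p1 (s p : ℕ) | p2 (s p : ℕ) (t : St)

open Ph

def Gen (k k' : Kd) (s s' : ℕ) : Prop :=
  (k = push ∧ k' = push ∧ s' = s + 1) ∨ (∃ d, d < s ∧ k = res d ∧ k' = res d ∧ s' = s) ∨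
  (∃ d, d < s ∧ k = del d ∧ k' = del d ∧ s' + 1 = s)

inductive Tr (k k' : Kd) (j : ℕ) : Ph → Ph → Prop
  | g0 (s s' : ℕ) : Gen k k' s s' → Tr k k' j (p0 s) (p0 s')
  | g1 (s s' p : ℕ) : Gen k k' s s' → Tr k k' j (p1 s p) (p1 s' p)
  | g2 (s s' p : ℕ) (t : St) : Gen k k' s s' → Tr k k' j (p2 s p t) (p2 s' p t)
  | bump (s : ℕ) : k = res s → k' = push → Tr k k' j (p0 s) (p1 0 s)
  | hit1 (s p : ℕ) : k = del s → k' = res s → Tr k k' j (p1 s p) (p2 s p (K (j+1) s))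
  | hit2 (s p : ℕ) (t : St) : k = del s → k' = del (s+1) →
      Tr k k' j (p2 s (p+1) t) (p2 s p (K (j+1) s))

/-- Comparison data for a word and its promotion. -/
structure Cmp (κ κ' : ℕ → Kd) (N : ℕ) (ph : ℕ → Ph) : Prop where
  zero : ph 0 = p0 0
  tr : ∀ j, j + 1 < N → Tr (κ (j+1)) (κ' j) j (ph j) (ph (j+1))
  push0 : κ 0 = push
  fin : ∃ t, ph (N-1) = p2 0 0 t
  del0 : κ' (N-1) = del 0

def RF : Ph → ℕ → ℕ → St → Prop
  | p0 s, j, i, st => i < s ∧ st = F (j+1) i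
  | p1 s p, j, i, st => i ≤ s + p ∧ st = F (j+1) i
  | p2 s p t, j, i, st => (i < s ∧ st = F (j+1) i) ∨ (i = s ∧ st = t) ∨
      (s < i ∧ i ≤ s + p ∧ st = F (j+1) (i-1))

def RK : Ph → ℕ → ℕ → St → Prop
  | p0 s, j, i, st => i < s ∧ st = K (j+1) i
  | p1 s p, j, i, st => (i < s ∧ st = K (j+1) i) ∨ (i = s ∧ st = S 0) ∨
      (s < i ∧ i ≤ s + p ∧ st = K (j+1) (i-1))
  | p2 s p t, j, i, st => (i < s ∧ st = K (j+1) i) ∨ (i = s ∧ st = S 0) ∨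
      (i = s + 1 ∧ 1 ≤ p ∧ st = t) ∨ (s + 2 ≤ i ∧ i ≤ s + p ∧ st = K (j+1) (i-2))

/-- The simulation relation. -/
def RR (N : ℕ) (ph : ℕ → Ph) : St → St → Prop
  | F j i, st => j < N ∧ RF (ph j) j i st
  | K j i, st => j < N ∧ RK (ph j) j i st
  | S p, st => p < N ∧ st = S ((p+1) % N)
  | E p, st => st = E ((p+1) % N)

/-- the trip from the first position runs along the top of the stack -/
theorem first_reach {κ κ' : ℕ → Kd} {N : ℕ} {ph : ℕ → Ph} (h : Cmp κ κ' N ph) (j : ℕ) :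
    j < N → ∀ s, ph j = p0 s → Reach κ (S 0) (F (j+1) s) := by
  induction j with
  | zero =>
    intro _ s hs
    rw [h.zero] at hs
    cases hs
    have := Reach.step κ (S 0)
    simpa [next, h.push0] using this
  | succ j ih =>
    intro hj s hs
    have ht := h.tr j hj
    rw [hs] at ht
    generalize hq : ph j = q at ht
    cases ht with
    | g0 s0 _ hg =>
      refine (ih (by omega) _ hq).trans ?_
      have := Reach.step κ (F (j+1) s0)
      rcases hg with ⟨h1, _, rfl⟩ | ⟨d, hd, h1, _, rfl⟩ | ⟨d, hd, h1, _, h2⟩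
      · simpa [next, h1] using this
      · simp only [next, h1] at this
        rwa [if_neg (by omega), if_neg (by omega)] at this
      · simp only [next, h1] at this
        rw [if_neg (by omega), if_neg (by omega), if_neg (by omega)] at this
        have e : s0 - 1 = s := by omega
        rwa [e] at this

/-- backward along the top of the stack leads to the first position -/
theorem top_reach {κ κ' : ℕ → Kd} {N : ℕ} {ph : ℕ → Ph} (h : Cmp κ κ' N ph) (j : ℕ) :
    j < N → (∀ s, ph j = p0 s → Reach κ (K (j+1) s) (E 0)) ∧
      (∀ s p, ph j = p1 s p → Reach κ (K (j+1) (s+p)) (E 0)) ∧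
      (∀ s p t, ph j = p2 s (p+1) t → Reach κ (K (j+1) (s+p)) (E 0)) := by
  induction j with
  | zero =>
    intro _
    rw [h.zero]
    refine ⟨?_, ?_, ?_⟩
    · intro s hs
      cases hs
      have := Reach.step κ (K 1 0)
      simpa [next, h.push0] using this
    · intro s p hs; cases hs
    · intro s p t hs; cases hs
  | succ j ih =>
    intro hj
    have ht := h.tr j hj
    obtain ⟨i0, i1, i2⟩ := ih (by omega)
    have gen : ∀ s s' p, Gen (κ (j+1)) (κ' j) s s' →
        Reach κ (K (j+1+1) (s'+p)) (K (j+1) (s + p)) := by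
      intro s s' p hg
      have := Reach.step κ (K (j+1+1) (s'+p))
      rcases hg with ⟨h1, _, rfl⟩ | ⟨d, hd, h1, _, rfl⟩ | ⟨d, hd, h1, _, h2⟩
      · simp only [next, h1] at this
        rw [if_neg (by omega)] at this
        have e : s + 1 + p - 1 = s + p := by omega
        rwa [e] at this
      · simpa only [next, h1] using this
      · simp only [next, h1] at this
        rw [if_neg (by omega)] at this
        have e : s' + p + 1 = s + p := by omega
        rwa [e] at this
    refine ⟨?_, ?_, ?_⟩
    · intro s hs
      rw [hs] at ht
      generalize hq : ph j = q at ht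
      cases ht with
      | g0 s0 _ hg => exact (gen s0 s 0 hg).trans (i0 _ hq)
    · intro s p hs
      rw [hs] at ht
      generalize hq : ph j = q at ht
      cases ht with
      | g1 s0 _ _ hg => exact (gen s0 s p hg).trans (i1 _ _ hq)
      | bump _ h1 h2 =>
        refine Reach.trans ?_ (i0 _ hq)
        have := Reach.step κ (K (j+1+1) (0+p))
        simpa [next, h1] using this
    · intro s p t hs
      rw [hs] at ht
      generalize hq : ph j = q at ht
      cases ht with
      | g2 s0 _ _ _ hg => exact (gen s0 s p hg).trans (i2 _ _ _ hq)
      | hit1 _ _ h1 h2 =>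
        refine Reach.trans ?_ (i1 _ _ hq)
        have := Reach.step κ (K (j+1+1) (s+p))
        simp only [next, h1] at this
        rwa [if_neg (by omega)] at this
      | hit2 _ _ t h1 h2 =>
        refine Reach.trans ?_ (i2 _ _ _ hq)
        have := Reach.step κ (K (j+1+1) (s+p))
        simp only [next, h1] at this
        rwa [if_neg (by omega)] at this

theorem turn_reach {κ κ' : ℕ → Kd} {N : ℕ} {ph : ℕ → Ph} (h : Cmp κ κ' N ph) (j : ℕ) :
    j < N → ∀ s t, ph j = p2 s 0 t → Reach κ t (E 0) := by
  induction j with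
  | zero =>
    intro _ s t hs
    rw [h.zero] at hs
    cases hs
  | succ j ih =>
    intro hj s t hs
    have ht := h.tr j hj
    obtain ⟨i0, i1, i2⟩ := top_reach h j (by omega)
    rw [hs] at ht
    generalize hq : ph j = q at ht
    cases ht with
    | g2 s0 _ _ _ hg => exact ih (by omega) _ _ hq
    | hit1 _ _ h1 h2 => exact i1 _ _ hq
    | hit2 _ _ t h1 h2 => exact i2 _ _ _ hq

set_option linter.unusedSimpArgs false
set_option linter.unnecessarySeqFocus false

theorem sim_F {κ κ' : ℕ → Kd} {N : ℕ} {ph : ℕ → Ph} (h : Cmp κ κ' N ph) (j i : ℕ) (st : St)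
    (hj : j + 1 < N) (hr : RF (ph j) j i st) :
    ∃ st2, Reach κ st st2 ∧ RR N ph (next κ' (F j i)) st2 := by
  have ht := h.tr j hj
  have hm : (j + 1) % N = j + 1 := Nat.mod_eq_of_lt hj
  generalize hq : ph j = q at ht hr
  generalize hq' : ph (j+1) = q' at ht
  cases ht with
  | g0 s s' hg =>
    obtain ⟨hi, rfl⟩ := hr
    refine ⟨next κ _, Reach.step κ _, ?_⟩
    rcases hg with ⟨h1, h2, rfl⟩ | ⟨d, hd, h1, h2, rfl⟩ | ⟨d, hd, h1, h2, h3⟩ <;>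
    simp only [next, h1, h2] <;> (repeat' split_ifs) <;>
    simp only [RR, hq, hq', RF, RK, hm] <;> grind
  | g1 s s' p hg =>
    obtain ⟨hi, rfl⟩ := hr
    refine ⟨next κ _, Reach.step κ _, ?_⟩
    rcases hg with ⟨h1, h2, rfl⟩ | ⟨d, hd, h1, h2, rfl⟩ | ⟨d, hd, h1, h2, h3⟩ <;>
    simp only [next, h1, h2] <;> (repeat' split_ifs) <;>
    simp only [RR, hq, hq', RF, RK, hm] <;> grind
  | g2 s s' p t hg =>
    rcases hr with ⟨hi, rfl⟩ | ⟨hi, rfl⟩ | ⟨hi, hi', rfl⟩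
    · refine ⟨next κ _, Reach.step κ _, ?_⟩
      rcases hg with ⟨h1, h2, rfl⟩ | ⟨d, hd, h1, h2, rfl⟩ | ⟨d, hd, h1, h2, h3⟩ <;>
      simp only [next, h1, h2] <;> (repeat' split_ifs) <;>
      simp only [RR, hq, hq', RF, RK, hm] <;> grind
    · refine ⟨_, Reach.refl κ _, ?_⟩
      rcases hg with ⟨h1, h2, rfl⟩ | ⟨d, hd, h1, h2, rfl⟩ | ⟨d, hd, h1, h2, h3⟩ <;>
      simp only [next, h1, h2] <;> (repeat' split_ifs) <;>
      simp only [RR, hq, hq', RF, RK, hm] <;> grind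
    · refine ⟨next κ _, Reach.step κ _, ?_⟩
      rcases hg with ⟨h1, h2, rfl⟩ | ⟨d, hd, h1, h2, rfl⟩ | ⟨d, hd, h1, h2, h3⟩ <;>
      simp only [next, h1, h2] <;> (repeat' split_ifs) <;>
      simp only [RR, hq, hq', RF, RK, hm] <;> grind
  | bump s h1 h2 =>
    obtain ⟨hi, rfl⟩ := hr
    refine ⟨next κ _, Reach.step κ _, ?_⟩
    simp only [next, h1, h2] <;> (repeat' split_ifs) <;>
    simp only [RR, hq, hq', RF, RK, hm] <;> grind
  | hit1 s p h1 h2 =>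
    obtain ⟨hi, rfl⟩ := hr
    refine ⟨next κ _, Reach.step κ _, ?_⟩
    simp only [next, h1, h2] <;> (repeat' split_ifs) <;>
    simp only [RR, hq, hq', RF, RK, hm] <;> grind
  | hit2 s p t h1 h2 =>
    rcases hr with ⟨hi, rfl⟩ | ⟨hi, rfl⟩ | ⟨hi, hi', rfl⟩
    · refine ⟨next κ _, Reach.step κ _, ?_⟩
      simp only [next, h1, h2] <;> (repeat' split_ifs) <;>
      simp only [RR, hq, hq', RF, RK, hm] <;> grind
    · refine ⟨_, Reach.refl κ _, ?_⟩
      simp only [next, h1, h2] <;> (repeat' split_ifs) <;>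
      simp only [RR, hq, hq', RF, RK, hm] <;> grind
    · refine ⟨next κ _, Reach.step κ _, ?_⟩
      simp only [next, h1, h2] <;> (repeat' split_ifs) <;>
      simp only [RR, hq, hq', RF, RK, hm] <;> grind

theorem sim_K {κ κ' : ℕ → Kd} {N : ℕ} {ph : ℕ → Ph} (h : Cmp κ κ' N ph) (j i : ℕ) (st : St)
    (hj : j + 1 < N) (hr : RK (ph (j+1)) (j+1) i st) :
    ∃ st2, Reach κ st st2 ∧ RR N ph (next κ' (K (j+1) i)) st2 := by
  have ht := h.tr j hj
  have hm : (j + 1) % N = j + 1 := Nat.mod_eq_of_lt hj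
  have hfirst := first_reach h j (by omega)
  generalize hq : ph j = q at ht
  generalize hq' : ph (j+1) = q' at ht hr
  cases ht with
  | g0 s s' hg =>
    obtain ⟨hi, rfl⟩ := hr
    refine ⟨next κ _, Reach.step κ _, ?_⟩
    rcases hg with ⟨h1, h2, rfl⟩ | ⟨d, hd, h1, h2, rfl⟩ | ⟨d, hd, h1, h2, h3⟩ <;>
    simp only [next, h1, h2] <;> (repeat' split_ifs) <;>
    simp only [RR, hq, hq', RF, RK, hm] <;> grind
  | g1 s s' p hg =>
    rcases hr with ⟨hi, rfl⟩ | ⟨hi, rfl⟩ | ⟨hi, hi', rfl⟩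
    · refine ⟨next κ _, Reach.step κ _, ?_⟩
      rcases hg with ⟨h1, h2, rfl⟩ | ⟨d, hd, h1, h2, rfl⟩ | ⟨d, hd, h1, h2, h3⟩ <;>
      simp only [next, h1, h2] <;> (repeat' split_ifs) <;>
      simp only [RR, hq, hq', RF, RK, hm] <;> grind
    · refine ⟨_, Reach.refl κ _, ?_⟩
      rcases hg with ⟨h1, h2, rfl⟩ | ⟨d, hd, h1, h2, rfl⟩ | ⟨d, hd, h1, h2, h3⟩ <;>
      simp only [next, h1, h2] <;> (repeat' split_ifs) <;>
      simp only [RR, hq, hq', RF, RK, hm] <;> grind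
    · refine ⟨next κ _, Reach.step κ _, ?_⟩
      rcases hg with ⟨h1, h2, rfl⟩ | ⟨d, hd, h1, h2, rfl⟩ | ⟨d, hd, h1, h2, h3⟩ <;>
      simp only [next, h1, h2] <;> (repeat' split_ifs) <;>
      simp only [RR, hq, hq', RF, RK, hm] <;> grind
  | g2 s s' p t hg =>
    rcases hr with ⟨hi, rfl⟩ | ⟨hi, rfl⟩ | ⟨hi, hi', rfl⟩ | ⟨hi, hi', rfl⟩
    · refine ⟨next κ _, Reach.step κ _, ?_⟩
      rcases hg with ⟨h1, h2, rfl⟩ | ⟨d, hd, h1, h2, rfl⟩ | ⟨d, hd, h1, h2, h3⟩ <;>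
      simp only [next, h1, h2] <;> (repeat' split_ifs) <;>
      simp only [RR, hq, hq', RF, RK, hm] <;> grind
    · refine ⟨_, Reach.refl κ _, ?_⟩
      rcases hg with ⟨h1, h2, rfl⟩ | ⟨d, hd, h1, h2, rfl⟩ | ⟨d, hd, h1, h2, h3⟩ <;>
      simp only [next, h1, h2] <;> (repeat' split_ifs) <;>
      simp only [RR, hq, hq', RF, RK, hm] <;> grind
    · refine ⟨_, Reach.refl κ _, ?_⟩
      rcases hg with ⟨h1, h2, rfl⟩ | ⟨d, hd, h1, h2, rfl⟩ | ⟨d, hd, h1, h2, h3⟩ <;>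
      simp only [next, h1, h2] <;> (repeat' split_ifs) <;>
      simp only [RR, hq, hq', RF, RK, hm] <;> grind
    · refine ⟨next κ _, Reach.step κ _, ?_⟩
      rcases hg with ⟨h1, h2, rfl⟩ | ⟨d, hd, h1, h2, rfl⟩ | ⟨d, hd, h1, h2, h3⟩ <;>
      simp only [next, h1, h2] <;> (repeat' split_ifs) <;>
      simp only [RR, hq, hq', RF, RK, hm] <;> grind
  | bump s h1 h2 =>
    rcases hr with ⟨hi, rfl⟩ | ⟨hi, rfl⟩ | ⟨hi, hi', rfl⟩
    · omega
    · refine ⟨E (j+1), ?_, ?_⟩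
      · refine (hfirst s hq).trans ?_
        have := Reach.step κ (F (j+1) s)
        simpa [next, h1] using this
      · simp [next, h2, hi, RR, hm]
    · refine ⟨next κ _, Reach.step κ _, ?_⟩
      simp only [next, h1, h2] <;> (repeat' split_ifs) <;>
      simp only [RR, hq, hq', RF, RK, hm] <;> grind
  | hit1 s p h1 h2 =>
    rcases hr with ⟨hi, rfl⟩ | ⟨hi, rfl⟩ | ⟨hi, hi', rfl⟩ | ⟨hi, hi', rfl⟩
    · refine ⟨next κ _, Reach.step κ _, ?_⟩
      simp only [next, h1, h2] <;> (repeat' split_ifs) <;>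
      simp only [RR, hq, hq', RF, RK, hm] <;> grind
    · refine ⟨_, Reach.refl κ _, ?_⟩
      simp only [next, h1, h2] <;> (repeat' split_ifs) <;>
      simp only [RR, hq, hq', RF, RK, hm] <;> grind
    · refine ⟨_, Reach.refl κ _, ?_⟩
      simp only [next, h1, h2] <;> (repeat' split_ifs) <;>
      simp only [RR, hq, hq', RF, RK, hm] <;> grind
    · refine ⟨next κ _, Reach.step κ _, ?_⟩
      simp only [next, h1, h2] <;> (repeat' split_ifs) <;>
      simp only [RR, hq, hq', RF, RK, hm] <;> grind
  | hit2 s p t h1 h2 =>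
    rcases hr with ⟨hi, rfl⟩ | ⟨hi, rfl⟩ | ⟨hi, hi', rfl⟩ | ⟨hi, hi', rfl⟩
    · refine ⟨next κ _, Reach.step κ _, ?_⟩
      simp only [next, h1, h2] <;> (repeat' split_ifs) <;>
      simp only [RR, hq, hq', RF, RK, hm] <;> grind
    · refine ⟨_, Reach.refl κ _, ?_⟩
      simp only [next, h1, h2] <;> (repeat' split_ifs) <;>
      simp only [RR, hq, hq', RF, RK, hm] <;> grind
    · refine ⟨_, Reach.refl κ _, ?_⟩
      simp only [next, h1, h2] <;> (repeat' split_ifs) <;>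
      simp only [RR, hq, hq', RF, RK, hm] <;> grind
    · refine ⟨next κ _, Reach.step κ _, ?_⟩
      simp only [next, h1, h2] <;> (repeat' split_ifs) <;>
      simp only [RR, hq, hq', RF, RK, hm] <;> grind

theorem sim_S {κ κ' : ℕ → Kd} {N : ℕ} {ph : ℕ → Ph} (h : Cmp κ κ' N ph) (j : ℕ)
    (hj : j + 1 < N) :
    RR N ph (next κ' (S j)) (next κ (S (j+1))) := by
  have ht := h.tr j hj
  generalize hq : ph j = q at ht
  generalize hq' : ph (j+1) = q' at ht
  cases ht with
  | g0 s s' hg =>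
    rcases hg with ⟨h1, h2, rfl⟩ | ⟨d, hd, h1, h2, rfl⟩ | ⟨d, hd, h1, h2, h3⟩ <;>
    simp only [next, h1, h2] <;> (repeat' split_ifs) <;>
    simp only [RR, hq, hq', RF, RK] <;> grind
  | g1 s s' p hg =>
    rcases hg with ⟨h1, h2, rfl⟩ | ⟨d, hd, h1, h2, rfl⟩ | ⟨d, hd, h1, h2, h3⟩ <;>
    simp only [next, h1, h2] <;> (repeat' split_ifs) <;>
    simp only [RR, hq, hq', RF, RK] <;> grind
  | g2 s s' p t hg =>
    rcases hg with ⟨h1, h2, rfl⟩ | ⟨d, hd, h1, h2, rfl⟩ | ⟨d, hd, h1, h2, h3⟩ <;>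
    simp only [next, h1, h2] <;> (repeat' split_ifs) <;>
    simp only [RR, hq, hq', RF, RK] <;> grind
  | bump s h1 h2 =>
    simp only [next, h1, h2] <;> (repeat' split_ifs) <;>
    simp only [RR, hq, hq', RF, RK] <;> grind
  | hit1 s p h1 h2 =>
    simp only [next, h1, h2] <;> (repeat' split_ifs) <;>
    simp only [RR, hq, hq', RF, RK] <;> grind
  | hit2 s p t h1 h2 =>
    simp only [next, h1, h2] <;> (repeat' split_ifs) <;>
    simp only [RR, hq, hq', RF, RK] <;> grind

theorem sim {κ κ' : ℕ → Kd} {N : ℕ} {ph : ℕ → Ph} (h : Cmp κ κ' N ph) (st' st : St)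
    (hr : RR N ph st' st) : ∃ st2, Reach κ st st2 ∧ RR N ph (next κ' st') st2 := by
  cases st' with
  | F j i =>
    obtain ⟨hj, hr⟩ := hr
    by_cases hj' : j + 1 < N
    · exact sim_F h j i st hj' hr
    · have e : j = N - 1 := by omega
      subst e
      obtain ⟨t, ht⟩ := h.fin
      have htr := turn_reach h (N-1) hj _ _ ht
      rw [ht] at hr
      rcases hr with ⟨hi, rfl⟩ | ⟨hi, rfl⟩ | ⟨hi, hi', rfl⟩
      · omega
      · refine ⟨_, htr, ?_⟩
        have e2 : N - 1 + 1 = N := by omega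
        simp [next, h.del0, hi, RR, e2]
      · omega
  | K j i =>
    obtain ⟨hj, hr⟩ := hr
    cases j with
    | zero =>
      rw [h.zero] at hr
      exact absurd hr.1 (by omega)
    | succ j => exact sim_K h j i st hj hr
  | S p =>
    obtain ⟨hp, rfl⟩ := hr
    by_cases hj' : p + 1 < N
    · rw [Nat.mod_eq_of_lt hj']
      exact ⟨_, Reach.step κ _, sim_S h p hj'⟩
    · have e : p = N - 1 := by omega
      subst e
      obtain ⟨t, ht⟩ := h.fin
      have e2 : N - 1 + 1 = N := by omega
      refine ⟨_, Reach.refl κ _, ?_⟩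
      simp [next, h.del0, RR, e2, ht, RK, hp]
  | E p =>
    exact ⟨st, Reach.refl κ st, hr⟩

theorem reach_transfer {κ κ' : ℕ → Kd} {N : ℕ} {ph : ℕ → Ph} (h : Cmp κ κ' N ph) (p q : ℕ)
    (hp : p < N) (hr : Reach κ' (S p) (E q)) : Reach κ (S ((p+1) % N)) (E ((q+1) % N)) := by
  obtain ⟨m, hm⟩ := hr
  have key : ∀ m, ∃ st2, Reach κ (S ((p+1) % N)) st2 ∧ RR N ph ((next κ')^[m] (S p)) st2 := by
    intro m
    induction m with
    | zero => exact ⟨_, Reach.refl κ _, hp, rfl⟩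
    | succ m ih =>
      obtain ⟨st2, h1, h2⟩ := ih
      obtain ⟨st3, h3, h4⟩ := sim h _ _ h2
      rw [Function.iterate_succ_apply']
      exact ⟨st3, h1.trans h3, h4⟩
  obtain ⟨st2, h1, h2⟩ := key m
  rw [hm] at h2
  have : st2 = E ((q+1) % N) := h2
  rwa [this] at h1

end KWP

namespace KWP
open Kd St Ph
set_option linter.unusedSimpArgs false

/-- number of letters `y` among the first `j` letters -/
def cn (a : ℕ → KLetter) (y : KLetter) : ℕ → ℕ
  | 0 => 0
  | j + 1 => cn a y j + if a j = y then 1 else 0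

/-- Function version of Kreweras words -/
structure KW (N : ℕ) (a : ℕ → KLetter) : Prop where
  nonneg : ∀ j, j ≤ N → ∀ y, y ≠ A → cn a y j ≤ cn a A j
  fin : ∀ y, y ≠ A → cn a y N = cn a A N

structure IsB (N : ℕ) (a : ℕ → KLetter) (b : ℕ) (x : KLetter) : Prop where
  ne : x ≠ A
  lt : b < N
  pos : 1 ≤ b
  ab : a b = x
  before : ∀ j, 1 ≤ j → j ≤ b → ∀ y, y ≠ A → cn a y j < cn a A j
  eq : cn a x (b+1) = cn a A (b+1)

/-- Function version of promotion -/
def proF (N : ℕ) (a : ℕ → KLetter) (b : ℕ) (x : KLetter) (j : ℕ) : KLetter :=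
  if j + 1 < N then (if j + 1 = b then A else a (j+1)) else x

def Kd.up : Kd → Kd
  | push => push
  | res d => res (d+1)
  | del d => del (d+1)

def kx (l : KLetter) : List KLetter → Kd
  | [] => del 0
  | s :: T => if s = l then del 0 else if s = A then res 0 else (kx l T).up

def ux (l : KLetter) : List KLetter → List KLetter
  | [] => []
  | s :: T => if s = l then T else if s = A then negL l :: T else s :: ux l T

def kind (l : KLetter) (T : List KLetter) : Kd := if l = A then push else kx l T

def upd (l : KLetter) (T : List KLetter) : List KLetter := if l = A then A :: T else ux l T

def stk (a : ℕ → KLetter) : ℕ → List KLetter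
  | 0 => []
  | j + 1 => upd (a j) (stk a j)

def kd (a : ℕ → KLetter) (j : ℕ) : Kd := kind (a j) (stk a j)

def Valid (l : KLetter) (T : List KLetter) : Prop := l ∈ T ∨ A ∈ T

theorem kx_valid {l : KLetter} {T : List KLetter} (h : Valid l T) :
    (∃ d, d < T.length ∧ kx l T = res d ∧ (ux l T).length = T.length) ∨
    (∃ d, d < T.length ∧ kx l T = del d ∧ (ux l T).length + 1 = T.length) := by
  induction T with
  | nil => simp [Valid] at h
  | cons s T ih =>
    by_cases h1 : s = l
    · right; exact ⟨0, by simp [kx, ux, h1]⟩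
    · by_cases h2 : s = A
      · left; refine ⟨0, by simp, ?_, ?_⟩ <;> simp [kx, ux, h1, h2] <;> grind
      · have hv : Valid l T := by
          simp only [Valid, List.mem_cons] at h ⊢; grind
        rcases ih hv with ⟨d, h3, h4, h5⟩ | ⟨d, h3, h4, h5⟩
        · left; exact ⟨d+1, by simp [kx, ux, h1, h2, h3, h4, h5, Kd.up]⟩
        · right; exact ⟨d+1, by simp [kx, ux, h1, h2, h3, h4, h5, Kd.up]⟩

theorem kx_append {l : KLetter} {T : List KLetter} (h : Valid l T) (U : List KLetter) :
    kx l (T ++ U) = kx l T ∧ ux l (T ++ U) = ux l T ++ U := by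
  induction T with
  | nil => simp [Valid] at h
  | cons s T ih =>
    by_cases h1 : s = l
    · simp [kx, ux, h1]
    · by_cases h2 : s = A
      · subst h2; simp [kx, ux, h1]
      · have hv : Valid l T := by
          simp only [Valid, List.mem_cons] at h ⊢; grind
        obtain ⟨h3, h4⟩ := ih hv
        simp [kx, ux, h1, h2, h3, h4]

theorem eq_neg {l s : KLetter} (hl : l ≠ A) (h1 : s ≠ l) (h2 : s ≠ A) : s = negL l := by
  cases l <;> cases s <;> simp_all [negL]

theorem neg_ne {l : KLetter} (hl : l ≠ A) : negL l ≠ A ∧ negL l ≠ l ∧ negL (negL l) = l := by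
  cases l <;> simp_all [negL]

theorem not_valid {l : KLetter} (hl : l ≠ A) {T : List KLetter} (h : ¬ Valid l T) :
    T = List.replicate T.length (negL l) := by
  rw [List.eq_replicate_iff]
  refine ⟨rfl, fun s hs => ?_⟩
  apply eq_neg hl
  · rintro rfl; exact h (Or.inl hs)
  · rintro rfl; exact h (Or.inr hs)

theorem kx_rep {l : KLetter} (hl : l ≠ A) (s : ℕ) (T : List KLetter) :
    kx l (List.replicate s (negL l) ++ A :: T) = res s ∧
    ux l (List.replicate s (negL l) ++ A :: T) = List.replicate s (negL l) ++ negL l :: T ∧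
    kx l (List.replicate s (negL l) ++ l :: T) = del s ∧
    ux l (List.replicate s (negL l) ++ l :: T) = List.replicate s (negL l) ++ T := by
  obtain ⟨h1, h2, h3⟩ := neg_ne hl
  induction s with
  | zero => simp [kx, ux, hl.symm]
  | succ s ih =>
    obtain ⟨i1, i2, i3, i4⟩ := ih
    simp [List.replicate_succ, kx, ux, h1, h2, i1, i2, i3, i4, Kd.up]

theorem ux_count {l : KLetter} (hl : l ≠ A) {T : List KLetter} (h : Valid l T) :
    (ux l T).count l + (ux l T).count A + 1 = T.count l + T.count A ∧
    (ux l T).count (negL l) + (ux l T).count A = T.count (negL l) + T.count A := by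
  obtain ⟨h1, h2, h3⟩ := neg_ne hl
  induction T with
  | nil => simp [Valid] at h
  | cons s T ih =>
    by_cases h4 : s = l
    · subst h4
      simp [ux, List.count_cons, hl, h2.symm]; omega
    · by_cases h5 : s = A
      · subst h5
        simp [ux, h4, List.count_cons, h1, h2, h1.symm]; omega
      · have hv : Valid l T := by
          simp only [Valid, List.mem_cons] at h ⊢; grind
        obtain ⟨i1, i2⟩ := ih hv
        have := eq_neg hl h4 h5
        subst this
        simp [ux, List.count_cons, h1, h2]; omega

theorem valid_of_count {l : KLetter} {T : List KLetter} (h : 1 ≤ T.count l + T.count A) :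
    Valid l T := by
  by_contra hc
  simp only [Valid, not_or] at hc
  rw [List.count_eq_zero_of_not_mem hc.1, List.count_eq_zero_of_not_mem hc.2] at h
  omega

theorem stk_count {N : ℕ} {a : ℕ → KLetter} (h : KW N a) (j : ℕ) : j ≤ N → ∀ y, y ≠ A →
    (stk a j).count y + (stk a j).count A + cn a y j = cn a A j := by
  induction j with
  | zero => intro _ y _; simp [stk, cn]
  | succ j ih =>
    intro hj y hy
    have ih := ih (by omega)
    by_cases hA : a j = A
    · have := ih y hy
      simp [stk, upd, cn, hA, hy.symm, List.count_cons]; omega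
    · have e1 := ih (a j) hA
      have e2 := ih y hy
      have e3 := h.nonneg (j+1) hj (a j) hA
      simp only [cn, if_true, hA, if_false] at e3
      have hv : Valid (a j) (stk a j) := valid_of_count (by omega)
      obtain ⟨c1, c2⟩ := ux_count hA hv
      by_cases hy' : y = a j
      · subst hy'
        simp [stk, upd, cn, hA]; omega
      · have e := eq_neg hA hy' hy
        subst e
        simp [stk, upd, cn, hA, (neg_ne hA).2.1.symm]; omega

theorem stk_valid {N : ℕ} {a : ℕ → KLetter} (h : KW N a) {j : ℕ} (hj : j < N) (hA : a j ≠ A) :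
    Valid (a j) (stk a j) := by
  have e1 := stk_count h j hj.le (a j) hA
  have e3 := h.nonneg (j+1) hj (a j) hA
  simp only [cn, if_true, hA, if_false] at e3
  exact valid_of_count (by omega)

theorem stk_fin {N : ℕ} {a : ℕ → KLetter} (h : KW N a) : stk a N = [] := by
  have e1 := stk_count h N le_rfl B (by simp)
  have e2 := stk_count h N le_rfl C (by simp)
  have f1 := h.fin B (by simp)
  have f2 := h.fin C (by simp)
  rw [List.eq_nil_iff_forall_not_mem]
  intro s hs
  have := List.count_pos_iff.2 hs
  cases s <;> omega

def Shape (a a' : ℕ → KLetter) (b : ℕ) (x : KLetter) (j : ℕ) : Ph → Prop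
  | p0 s => j < b ∧ ∃ T, T.length = s ∧ stk a (j+1) = T ++ [A] ∧ stk a' j = T
  | p1 s p => b ≤ j ∧ ∃ T, T.length = s ∧ stk a (j+1) = T ++ List.replicate (p+1) (negL x) ∧
      stk a' j = T ++ A :: List.replicate p (negL x)
  | p2 s p _ => b ≤ j ∧ ∃ T, T.length = s ∧ stk a (j+1) = T ++ List.replicate p (negL x) ∧
      stk a' j = T ++ x :: List.replicate p (negL x)

theorem gen_step {l : KLetter} {T : List KLetter} (h : l ≠ A → Valid l T) (U V : List KLetter) :
    Gen (kind l (T ++ U)) (kind l (T ++ V)) T.length (upd l T).length ∧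
    upd l (T ++ U) = upd l T ++ U ∧ upd l (T ++ V) = upd l T ++ V := by
  by_cases hl : l = A
  · simp [hl, kind, upd, Gen]
  · have hv := h hl
    simp only [kind, upd, hl, if_false, kx_append hv]
    refine ⟨?_, by trivial, by trivial⟩
    rcases kx_valid hv with ⟨d, h1, h2, h3⟩ | ⟨d, h1, h2, h3⟩
    · exact Or.inr (Or.inl ⟨d, h1, h2, h2, h3⟩)
    · exact Or.inr (Or.inr ⟨d, h1, h2, h2, h3⟩)

theorem shape_step {N : ℕ} {a : ℕ → KLetter} {b : ℕ} {x : KLetter} (h : KW N a)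
    (hb : IsB N a b x) (j : ℕ) (hj : j + 1 < N) (q : Ph)
    (hs : Shape a (proF N a b x) b x j q) :
    ∃ q', Tr (kd a (j+1)) (kd (proF N a b x) j) j q q' ∧
      Shape a (proF N a b x) b x (j+1) q' := by
  obtain ⟨n1, n2, n3⟩ := neg_ne hb.ne
  by_cases hjb : j + 1 = b
  · -- bump
    have e' : proF N a b x j = A := by rw [proF, if_pos hj, if_pos hjb]
    have e : a (j+1) = x := by rw [hjb]; exact hb.ab
    cases q with
    | p0 s =>
      obtain ⟨_, T, rfl, h1, h2⟩ := hs
      have c1 := stk_count h (j+1) (by omega) x hb.ne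
      have c2 := hb.eq
      rw [← hjb] at c2
      simp only [cn, e, hb.ne, if_true, if_false] at c2 c1
      rw [h1] at c1
      simp [hb.ne.symm] at c1
      have hnv : ¬ Valid x T := by
        intro hv
        rcases hv with hv | hv
        · have := List.count_pos_iff.2 hv; omega
        · have := List.count_pos_iff.2 hv; omega
      have hT := not_valid hb.ne hnv
      obtain ⟨k1, k2, -, -⟩ := kx_rep hb.ne T.length []
      rw [← hT] at k1 k2
      refine ⟨p1 0 T.length, Tr.bump _ ?_ ?_, by omega, [], rfl, ?_, ?_⟩
      · simp [kd, kind, e, hb.ne, h1, k1]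
      · simp [kd, kind, e']
      · rw [stk, e, h1]
        simp only [upd, hb.ne, if_false, k2]
        rw [List.replicate_succ', ← hT]; simp
      · rw [stk, e', h2]
        simp only [upd, if_true]
        rw [← hT]; rfl
    | p1 s p => have := hs.1; omega
    | p2 s p t => have := hs.1; omega
  · have e' : proF N a b x j = a (j+1) := by simp [proF, hj, hjb]
    have hval := stk_valid h (j := j+1) hj
    set l := a (j+1) with hl
    cases q with
    | p0 s =>
      obtain ⟨hlt, T, rfl, h1, h2⟩ := hs
      have hv : l ≠ A → Valid l T := by
        intro hA
        have c1 := stk_count h (j+1) (by omega) l hA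
        have c2 := hb.before (j+2) (by omega) (by omega) l hA
        simp only [cn, ← hl, if_true, hA, if_false] at c2 c1
        rw [h1] at c1
        simp [List.count_append, hA.symm] at c1
        exact valid_of_count (by omega)
      obtain ⟨g1, g2, g3⟩ := gen_step hv [A] []
      refine ⟨p0 (upd l T).length, Tr.g0 _ _ ?_, by omega, upd l T, rfl, ?_, ?_⟩
      · simpa only [kd, e', ← hl, h1, h2, List.append_nil] using g1
      · rw [stk, ← hl, h1, g2]
      · rw [stk, e', h2]
    | p1 s p =>
      obtain ⟨hlt, T, rfl, h1, h2⟩ := hs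
      by_cases hv : l ≠ A → Valid l T
      · obtain ⟨g1, g2, g3⟩ := gen_step hv (List.replicate (p+1) (negL x))
          (A :: List.replicate p (negL x))
        refine ⟨p1 (upd l T).length p, Tr.g1 _ _ _ ?_, by omega, upd l T, rfl, ?_, ?_⟩
        · simpa only [kd, e', ← hl, h1, h2] using g1
        · rw [stk, ← hl, h1, g2]
        · rw [stk, e', h2, g3]
      · push Not at hv
        obtain ⟨hA, hv⟩ := hv
        have hT := not_valid hA hv
        have hval := hval hA
        have hlx : l ≠ x := by
          intro hx
          rw [h1, hx] at hval
          rw [hx] at hv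
          rcases hval with hval | hval <;> rcases List.mem_append.1 hval with hval | hval
          · exact hv (Or.inl hval)
          · exact n2.symm (List.eq_of_mem_replicate hval)
          · exact hv (Or.inr hval)
          · exact n1.symm (List.eq_of_mem_replicate hval)
        have hlx' := eq_neg hb.ne hlx hA
        have hnl : negL l = x := by rw [hlx', n3]
        obtain ⟨k1, k2, -, -⟩ := kx_rep hA T.length (List.replicate p (negL x))
        obtain ⟨-, -, k3, k4⟩ := kx_rep hA T.length (List.replicate p (negL x))
        rw [← hT] at k1 k2 k3 k4
        refine ⟨p2 T.length p _, Tr.hit1 _ _ ?_ ?_, by omega, T, rfl, ?_, ?_⟩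
        · simp only [kd, kind, ← hl, hA, if_false, h1]
          rw [List.replicate_succ, ← hlx'] ; rw [← hlx'] at k3; exact k3
        · simp only [kd, kind, e', hA, if_false, h2]; exact k1
        · rw [stk, ← hl, h1]
          simp only [upd, hA, if_false]
          rw [List.replicate_succ, ← hlx']; rw [← hlx'] at k4; exact k4
        · rw [stk, e', h2]
          simp only [upd, hA, if_false]
          rw [k2, hnl]
    | p2 s p t =>
      obtain ⟨hlt, T, rfl, h1, h2⟩ := hs
      by_cases hv : l ≠ A → Valid l T
      · obtain ⟨g1, g2, g3⟩ := gen_step hv (List.replicate p (negL x))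
          (x :: List.replicate p (negL x))
        refine ⟨p2 (upd l T).length p t, Tr.g2 _ _ _ _ ?_, by omega, upd l T, rfl, ?_, ?_⟩
        · simpa only [kd, e', ← hl, h1, h2] using g1
        · rw [stk, ← hl, h1, g2]
        · rw [stk, e', h2, g3]
      · push Not at hv
        obtain ⟨hA, hv⟩ := hv
        have hT := not_valid hA hv
        have hval := hval hA
        have hlx : l ≠ x := by
          intro hx
          rw [h1, hx] at hval
          rw [hx] at hv
          rcases hval with hval | hval <;> rcases List.mem_append.1 hval with hval | hval
          · exact hv (Or.inl hval)
          · exact n2.symm (List.eq_of_mem_replicate hval)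
          · exact hv (Or.inr hval)
          · exact n1.symm (List.eq_of_mem_replicate hval)
        have hlx' := eq_neg hb.ne hlx hA
        have hnl : negL l = x := by rw [hlx', n3]
        cases p with
        | zero =>
          rw [h1] at hval
          simp only [List.replicate_zero, List.append_nil] at hval
          exact absurd hval hv
        | succ p =>
        obtain ⟨-, -, k1, k2⟩ := kx_rep hA (T.length + 1) (List.replicate p (negL x))
        obtain ⟨-, -, k3, k4⟩ := kx_rep hA T.length (List.replicate p (negL x))
        rw [List.replicate_succ', ← hT, hnl] at k1 k2
        rw [← hT] at k3 k4
        refine ⟨p2 T.length p _, Tr.hit2 _ _ _ ?_ ?_, by omega, T, rfl, ?_, ?_⟩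
        · simp only [kd, kind, ← hl, hA, if_false, h1]
          rw [List.replicate_succ, ← hlx'] ; rw [← hlx'] at k3; exact k3
        · simp only [kd, kind, e', hA, if_false, h2]
          rw [List.replicate_succ, ← hlx'] ; rw [← hlx'] at k1; simpa using k1
        · rw [stk, ← hl, h1]
          simp only [upd, hA, if_false]
          rw [List.replicate_succ, ← hlx']; rw [← hlx'] at k4; exact k4
        · rw [stk, e', h2]
          simp only [upd, hA, if_false]
          rw [List.replicate_succ, ← hlx']; rw [← hlx'] at k2; simpa using k2

theorem a_zero {N : ℕ} {a : ℕ → KLetter} (h : KW N a) (hN : 0 < N) : a 0 = A := by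
  by_contra hc
  have := h.nonneg 1 hN (a 0) hc
  simp [cn, hc] at this

open Classical in
/-- the sequence of comparison phases -/
noncomputable def phs (N : ℕ) (a : ℕ → KLetter) (b : ℕ) (x : KLetter) : ℕ → Ph
  | 0 => p0 0
  | j + 1 => if h : ∃ q', Tr (kd a (j+1)) (kd (proF N a b x) j) j (phs N a b x j) q' ∧
      Shape a (proF N a b x) b x (j+1) q' then h.choose else phs N a b x j

theorem phs_spec {N : ℕ} {a : ℕ → KLetter} {b : ℕ} {x : KLetter} (h : KW N a)
    (hb : IsB N a b x) (j : ℕ) : j < N → Shape a (proF N a b x) b x j (phs N a b x j) ∧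
      (j + 1 < N → Tr (kd a (j+1)) (kd (proF N a b x) j) j (phs N a b x j)
        (phs N a b x (j+1))) := by
  have step : ∀ j, j + 1 < N → Shape a (proF N a b x) b x j (phs N a b x j) →
      Tr (kd a (j+1)) (kd (proF N a b x) j) j (phs N a b x j) (phs N a b x (j+1)) ∧
      Shape a (proF N a b x) b x (j+1) (phs N a b x (j+1)) := by
    intro j hj hs
    have hex := shape_step h hb j hj _ hs
    rw [phs, dif_pos hex]
    exact hex.choose_spec
  have hs : ∀ j, j < N → Shape a (proF N a b x) b x j (phs N a b x j) := by
    intro j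
    induction j with
    | zero =>
      intro hN
      refine ⟨hb.pos, [], rfl, ?_, rfl⟩
      simp [stk, a_zero h hN, upd]
    | succ j ih => intro hj; exact (step j hj (ih (by omega))).2
  exact fun hj => ⟨hs j hj, fun hj' => (step j hj' (hs j hj)).1⟩

theorem cmp {N : ℕ} {a : ℕ → KLetter} {b : ℕ} {x : KLetter} (h : KW N a)
    (hb : IsB N a b x) : Cmp (kd a) (kd (proF N a b x)) N (phs N a b x) := by
  have hN : 0 < N := by have := hb.lt; omega
  have hs := (phs_spec h hb (N-1) (by omega)).1
  have e : N - 1 + 1 = N := by omega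
  have hfin := stk_fin h
  have key : (∃ t, phs N a b x (N-1) = p2 0 0 t) ∧ stk (proF N a b x) (N-1) = [x] := by
    generalize phs N a b x (N-1) = q at hs
    cases q with
    | p0 s =>
      obtain ⟨_, T, _, h1, _⟩ := hs
      rw [e, hfin] at h1; simp at h1
    | p1 s p =>
      obtain ⟨_, T, _, h1, _⟩ := hs
      rw [e, hfin] at h1; simp at h1
    | p2 s p t =>
      obtain ⟨_, T, hT, h1, h2⟩ := hs
      rw [e, hfin] at h1; simp at h1
      obtain ⟨rfl, rfl⟩ := h1
      simp at hT
      subst hT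
      exact ⟨⟨t, rfl⟩, by simpa using h2⟩
  refine ⟨rfl, fun j hj => (phs_spec h hb j (by omega)).2 hj, ?_, key.1, ?_⟩
  · simp [kd, kind, a_zero h hN]
  · have : proF N a b x (N-1) = x := by simp [proF, e]
    simp [kd, kind, this, hb.ne, key.2, kx]

/-- the trip from the first position ends at the bump -/
theorem trip_first {N : ℕ} {a : ℕ → KLetter} {b : ℕ} {x : KLetter} (h : KW N a)
    (hb : IsB N a b x) : Reach (kd a) (S 0) (E b) := by
  have hc := cmp h hb
  have hlt := hb.lt
  have hpos := hb.pos
  obtain ⟨hs, ht⟩ := phs_spec h hb (b-1) (by omega)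
  obtain ⟨hs', -⟩ := phs_spec h hb b hlt
  have e : b - 1 + 1 = b := by omega
  rw [e] at ht
  have ht := ht hlt
  have hf := first_reach hc (b-1) (by omega)
  generalize phs N a b x (b-1) = q at hs ht hf
  generalize phs N a b x b = q' at hs' ht
  cases ht with
  | g0 s s' => have := hs'.1; omega
  | g1 s s' p => have := hs.1; omega
  | g2 s s' p t => have := hs.1; omega
  | bump s h1 h2 =>
    have := hf s rfl
    rw [e] at this
    refine this.trans ?_
    have := Reach.step (kd a) (F b s)
    simpa [next, h1] using this
  | hit1 s p => have := hs.1; omega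
  | hit2 s p t => have := hs.1; omega

/-- count relation between a word and its promotion -/
theorem cn_proF {N : ℕ} {a : ℕ → KLetter} {b : ℕ} {x : KLetter} (h : KW N a)
    (hb : IsB N a b x) (y : KLetter) (j : ℕ) : j < N →
    cn a y (j+1) = cn (proF N a b x) y j + if (if j < b then A else x) = y then 1 else 0 := by
  have hpos := hb.pos
  induction j with
  | zero => intro hj; simp [cn, a_zero h hj, show 0 < b by omega]
  | succ j ih =>
    intro hj
    have ih := ih (by omega)
    rw [cn, ih]
    rw [cn]
    simp only [proF, hj, if_true]
    have hab := hb.ab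
    by_cases hjb : j + 1 = b
    · simp only [hjb, if_true, lt_irrefl, if_false, hab, show j < b by omega]
      try omega
    · have : j < b ↔ j + 1 < b := by omega
      simp only [hjb, if_false, this]
      omega

theorem kw_proF {N : ℕ} {a : ℕ → KLetter} {b : ℕ} {x : KLetter} (h : KW N a)
    (hb : IsB N a b x) : KW N (proF N a b x) := by
  have hpos := hb.pos
  have hlt := hb.lt
  have hne := hb.ne
  have last : ∀ y, cn (proF N a b x) y N = cn a y N := by
    intro y
    obtain ⟨M, rfl⟩ : ∃ M, N = M + 1 := ⟨N - 1, by omega⟩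
    have := cn_proF h hb y M (by omega)
    rw [this, cn]
    simp [proF, show ¬ M < b by omega]
  refine ⟨?_, ?_⟩
  · intro j hj y hy
    by_cases hj' : j = N
    · subst hj'; rw [last, last]; exact h.nonneg _ le_rfl y hy
    · have e1 := cn_proF h hb y j (by omega)
      have e2 := cn_proF h hb A j (by omega)
      by_cases hjb : j < b
      · simp only [hjb, if_true, hy.symm, if_false] at e1 e2
        have := hb.before (j+1) (by omega) (by omega) y hy
        omega
      · simp only [hjb, if_false, hne] at e1 e2
        have := h.nonneg (j+1) (by omega) y hy
        omega
  · intro y hy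
    rw [last, last]; exact h.fin y hy

theorem exists_bump {N : ℕ} {a : ℕ → KLetter} (h : KW N a) (hN : 0 < N) :
    ∃ b x, IsB N a b x := by
  classical
  have hex : ∃ j, 1 ≤ j ∧ ∃ y, y ≠ A ∧ cn a A j ≤ cn a y j :=
    ⟨N, hN, B, by simp, (h.fin B (by simp)).ge⟩
  obtain ⟨h1, x, hx, h2⟩ := Nat.find_spec hex
  have hmin := fun m => Nat.find_min hex (m := m)
  have hle : Nat.find hex ≤ N := Nat.find_min' hex ⟨hN, B, by simp, (h.fin B (by simp)).ge⟩
  generalize Nat.find hex = f at *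
  obtain ⟨b, rfl⟩ : ∃ b, f = b + 1 := ⟨f - 1, by omega⟩
  have hpos : 1 ≤ b := by
    by_contra hc
    have : b = 0 := by omega
    subst this
    simp [cn, a_zero h hN, hx.symm] at h2
  have hbef : ∀ j, 1 ≤ j → j ≤ b → ∀ y, y ≠ A → cn a y j < cn a A j := by
    intro j hj1 hj2 y hy
    by_contra hc
    exact hmin j (by omega) ⟨hj1, y, hy, by omega⟩
  have hab : a b = x := by
    by_contra hc
    have := hbef b hpos le_rfl x hx
    simp only [cn, hc, if_false] at h2
    omega
  exact ⟨b, x, hx, by omega, hpos, hab, hbef, le_antisymm (h.nonneg _ hle x hx) h2⟩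

theorem bump_unique {N : ℕ} {a : ℕ → KLetter} {b b' : ℕ} {x x' : KLetter}
    (hb : IsB N a b x) (hb' : IsB N a b' x') : b = b' := by
  by_contra hc
  rcases Nat.lt_or_gt_of_ne hc with h | h
  · have := hb'.before (b+1) (by omega) (by omega) x hb.ne
    have := hb.eq
    omega
  · have := hb.before (b'+1) (by omega) (by omega) x' hb'.ne
    have := hb'.eq
    omega

/-- A sequence of successive promotions. -/
structure Seq (N : ℕ) (a : ℕ → ℕ → KLetter) (b : ℕ → ℕ) (x : ℕ → KLetter) : Prop where
  kw : ∀ k, KW N (a k)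
  bp : ∀ k, IsB N (a k) (b k) (x k)
  pr : ∀ k, ∀ j, j < N → a (k+1) j = proF N (a k) (b k) (x k) j

theorem cn_congr {N : ℕ} {a a' : ℕ → KLetter} (h : ∀ j, j < N → a j = a' j) (y : KLetter) (j : ℕ) :
    j ≤ N → cn a y j = cn a' y j := by
  induction j with
  | zero => intro _; rfl
  | succ j ih => intro hj; rw [cn, cn, ih (by omega), h j (by omega)]

theorem IsB.congr {N : ℕ} {a a' : ℕ → KLetter} (h : ∀ j, j < N → a j = a' j) {b : ℕ}
    {x : KLetter} (hb : IsB N a b x) : IsB N a' b x := by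
  have hlt := hb.lt
  refine ⟨hb.ne, hb.lt, hb.pos, by rw [← h b hb.lt]; exact hb.ab, ?_, ?_⟩
  · intro j h1 h2 y hy
    rw [← cn_congr h y j (by omega), ← cn_congr h A j (by omega)]
    exact hb.before j h1 h2 y hy
  · rw [← cn_congr h x _ (by omega), ← cn_congr h A _ (by omega)]
    exact hb.eq

/-- reach in `a (i+t)` transfers to `a i`. -/
theorem seq_reach {N : ℕ} {a : ℕ → ℕ → KLetter} {b : ℕ → ℕ} {x : ℕ → KLetter}
    (h : Seq N a b x) (ha : ∀ k, a (k+1) = proF N (a k) (b k) (x k)) (t : ℕ) : ∀ i p q, p < N →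
    Reach (kd (a (i+t))) (S p) (E q) → q < N →
    Reach (kd (a i)) (S ((p+t) % N)) (E ((q+t) % N)) := by
  induction t with
  | zero =>
    intro i p q hp hr hq
    simpa [Nat.mod_eq_of_lt hp, Nat.mod_eq_of_lt hq] using hr
  | succ t ih =>
    intro i p q hp hr hq
    have hN : 0 < N := by omega
    have e : i + (t + 1) = (i + t) + 1 := by omega
    rw [e, ha] at hr
    have := reach_transfer (cmp (h.kw (i+t)) (h.bp (i+t))) p q hp hr
    have := ih i _ _ (Nat.mod_lt _ hN) this (Nat.mod_lt _ hN)
    simp only [Nat.mod_add_mod] at this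
    have e1 : p + 1 + t = p + (t + 1) := by omega
    have e2 : q + 1 + t = q + (t + 1) := by omega
    rwa [e1, e2] at this

theorem seq_period {N : ℕ} {a : ℕ → ℕ → KLetter} {b : ℕ → ℕ} {x : ℕ → KLetter}
    (h : Seq N a b x) (ha : ∀ k, a (k+1) = proF N (a k) (b k) (x k)) (i : ℕ) :
    b (i + N) = b i := by
  have hlt := (h.bp (i+N)).lt
  have h1 := trip_first (h.kw (i+N)) (h.bp (i+N))
  have h2 := trip_first (h.kw i) (h.bp i)
  have h3 := seq_reach h ha N i 0 _ (by omega) h1 hlt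
  simp [Nat.mod_eq_of_lt hlt] at h3
  exact h3.det h2

end KWP

namespace KWP
set_option linter.unusedSimpArgs false

/-- the list of the first `N` values of a function -/
def L (N : ℕ) (z : ℕ → KLetter) : List KLetter := (List.range N).map z

theorem L_length (N : ℕ) (z : ℕ → KLetter) : (L N z).length = N := by simp [L]

theorem L_getElem? (N : ℕ) (z : ℕ → KLetter) (i : ℕ) :
    (L N z)[i]? = if i < N then some (z i) else none := by
  by_cases h : i < N
  · simp [L, h]
  · simp [L, h]

theorem L_getD {N : ℕ} (z : ℕ → KLetter) {i : ℕ} (h : i < N) : (L N z).getD i A = z i := by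
  rw [List.getD_eq_getElem?_getD, L_getElem?, if_pos h]; rfl

theorem L_congr {N : ℕ} {z z' : ℕ → KLetter} (h : ∀ i, i < N → z i = z' i) : L N z = L N z' := by
  apply List.map_congr_left
  intro i hi
  exact h i (List.mem_range.1 hi)

theorem L_self (w : List KLetter) : L w.length (fun i => w.getD i A) = w := by
  apply List.ext_getElem?
  intro i
  rw [L_getElem?]
  by_cases h : i < w.length
  · simp [h]
  · simp [h, List.getElem?_eq_none (not_lt.1 h)]

theorem L_count (z : ℕ → KLetter) (y : KLetter) (N : ℕ) : (L N z).count y = cn z y N := by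
  induction N with
  | zero => rfl
  | succ N ih =>
    rw [cn, ← ih, L, L, List.range_succ, List.map_append, List.count_append]
    simp [List.count_singleton, List.count_cons]

theorem L_take (N j : ℕ) (z : ℕ → KLetter) : (L N z).take j = L (min j N) z := by
  rw [L, ← List.map_take, List.take_range]; rfl

theorem cn_sum (z : ℕ → KLetter) (j : ℕ) : cn z A j + cn z B j + cn z C j = j := by
  induction j with
  | zero => rfl
  | succ j ih =>
    rw [cn, cn, cn]
    cases z j <;> simp <;> omega

theorem isK_iff (n : ℕ) (z : ℕ → KLetter) : IsKrewerasWord n (L (3*n) z) ↔ KW (3*n) z := by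
  unfold IsKrewerasWord
  simp only [L_length, L_take, L_count, true_and]
  constructor
  · rintro ⟨h1, h2, h3, h4⟩
    refine ⟨?_, ?_⟩
    · intro j hj y hy
      have := h4 j
      rw [min_eq_left hj] at this
      cases y
      · exact le_rfl
      · exact this.1
      · exact this.2
    · intro y hy
      cases y <;> omega
  · intro h
    have s := cn_sum z (3*n)
    have e1 := h.fin B (by simp)
    have e2 := h.fin C (by simp)
    refine ⟨by omega, by omega, by omega, fun k => ⟨?_, ?_⟩⟩
    · exact h.nonneg _ (min_le_right _ _) B (by simp)
    · exact h.nonneg _ (min_le_right _ _) C (by simp)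

theorem kiota_L {N : ℕ} {a : ℕ → KLetter} {b : ℕ} {x : KLetter}
    (hb : IsB N a b x) : kiota (L N a) = b + 1 := by
  have hlt := hb.lt
  unfold kiota
  rw [List.headD_eq_head?_getD, List.head?_filter]
  have : List.find? (fun k => decide (1 ≤ k) &&
      ((((L N a).take k).count A == ((L N a).take k).count B) ||
       (((L N a).take k).count A == ((L N a).take k).count C)))
       (List.range ((L N a).length + 1)) = some (b+1) := by
    rw [List.find?_range_eq_some]
    simp only [L_take, L_count, L_length]
    refine ⟨?_, ?_, ?_⟩
    · rw [min_eq_left (by omega)]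
      have e := hb.eq
      have ne := hb.ne
      cases x
      · exact absurd rfl ne
      · simp [e]
      · simp [e]
    · simp; omega
    · intro j hj
      rw [min_eq_left (by omega)]
      by_cases h0 : 1 ≤ j
      · have f1 := hb.before j h0 (by omega) B (by simp)
        have f2 := hb.before j h0 (by omega) C (by simp)
        have g1 : cn a A j ≠ cn a B j := by omega
        have g2 : cn a A j ≠ cn a C j := by omega
        simp [g1, g2]
      · simp [h0]
  rw [this]; rfl

theorem pro_L {N : ℕ} {a : ℕ → KLetter} {b : ℕ} {x : KLetter} 
    (hb : IsB N a b x) : pro (L N a) = L N (proF N a b x) := by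
  have hlt := hb.lt
  have hpos := hb.pos
  unfold pro
  rw [kiota_L hb]
  apply List.ext_getElem?
  intro i
  rw [L_getElem?, List.getElem?_append]
  simp only [List.length_set, List.length_drop, L_length, List.getElem?_set, List.getElem?_drop,
    L_getElem?]
  have hx : (L N a).getD (b + 1 - 1) A = x := by
    rw [L_getD _ (by omega)]; exact hb.ab
  rw [hx]
  unfold proF
  by_cases h1 : i < N - 1
  · have : i + 1 < N := by omega
    rw [if_pos h1, if_pos (show i < N by omega), if_pos this, add_comm 1 i, if_pos this]
    by_cases h2 : i + 1 = b
    · rw [if_pos (show b + 1 - 2 = i by omega), if_pos h2, if_pos (by omega)]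
    · rw [if_neg (show ¬ (b + 1 - 2 = i) by omega), if_neg h2]
  · rw [if_neg h1]
    by_cases h2 : i < N
    · have : i - (N - 1) = 0 := by omega
      rw [this, if_pos h2, if_neg (by omega)]; rfl
    · rw [if_neg h2]
      apply List.getElem?_eq_none
      simp; omega

/-- swap of two consecutive values -/
def sw (m : ℕ) (z : ℕ → KLetter) (i : ℕ) : KLetter :=
  if i = m + 1 then z m else if i = m then z (m+1) else z i

theorem swap_L {N m : ℕ} (hm : m + 1 < N) (z : ℕ → KLetter) :
    ((L N z).set (m + 1 - 1) ((L N z).getD (m+1) A)).set (m+1) ((L N z).getD (m + 1 - 1) A)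
      = L N (sw m z) := by
  apply List.ext_getElem?
  intro i
  rw [L_getD _ hm, L_getD _ (by omega)]
  simp only [List.getElem?_set, List.length_set, L_length, L_getElem?, Nat.add_sub_cancel]
  unfold sw
  by_cases h1 : i = m + 1
  · subst h1; simp [hm]
  · rw [if_neg (fun h => h1 h.symm)]
    by_cases h2 : i = m
    · subst h2; simp [show i < N by omega]
    · rw [if_neg (fun h => h2 h.symm)]; simp [h1, h2]

theorem tau_L {n m : ℕ} (hm : m + 1 < 3 * n) (z : ℕ → KLetter) :
    (KW (3*n) (sw m z) → tau n (m+1) (L (3*n) z) = L (3*n) (sw m z)) ∧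
    (¬ KW (3*n) (sw m z) → tau n (m+1) (L (3*n) z) = L (3*n) z) := by
  unfold tau
  have e := swap_L hm z
  constructor
  · intro h
    have h' := (isK_iff n _).2 h
    rw [← e] at h' ⊢
    exact if_pos h'
  · intro h
    have h' := fun g => h ((isK_iff n _).1 g)
    rw [← e] at h'
    exact if_neg h'

/-- intermediate stage of promotion by toggles -/
def Zf (N : ℕ) (a : ℕ → KLetter) (b : ℕ) (x : KLetter) (m i : ℕ) : KLetter :=
  if i < m then proF N a b x i else if i = m then (if m < b then A else x) else a i

theorem cn_Zf_low (N : ℕ) (a : ℕ → KLetter) (b : ℕ) (x : KLetter) (m : ℕ) (y : KLetter) (i : ℕ)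
    (hi : i ≤ m) : cn (Zf N a b x m) y i = cn (proF N a b x) y i := by
  refine cn_congr (N := m) ?_ y i hi
  intro j hj
  simp [Zf, hj]

theorem cn_Zf_high {N : ℕ} {a : ℕ → KLetter} {b : ℕ} {x : KLetter} (h : KW N a)
    (hb : IsB N a b x) {m : ℕ} (hm : m < N) (y : KLetter) (i : ℕ)
    (hi : m < i) : cn (Zf N a b x m) y i = cn a y i := by
  induction i with
  | zero => omega
  | succ i ih =>
    by_cases hmi : m = i
    · subst hmi
      rw [cn, cn_Zf_low _ _ _ _ _ _ _ le_rfl, cn_proF h hb y m hm]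
      simp [Zf]
    · rw [cn, cn, ih (by omega)]
      simp [Zf, show ¬ i < m by omega, show ¬ i = m by omega]

theorem kw_Zf {N : ℕ} {a : ℕ → KLetter} {b : ℕ} {x : KLetter} (h : KW N a)
    (hb : IsB N a b x) {m : ℕ} (hm : m < N) : KW N (Zf N a b x m) := by
  have h' := kw_proF h hb
  constructor
  · intro j hj y hy
    by_cases hjm : j ≤ m
    · rw [cn_Zf_low _ _ _ _ _ _ _ hjm, cn_Zf_low _ _ _ _ _ _ _ hjm]
      exact h'.nonneg j hj y hy
    · rw [cn_Zf_high h hb hm _ _ (by omega), cn_Zf_high h hb hm _ _ (by omega)]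
      exact h.nonneg j hj y hy
  · intro y hy
    rw [cn_Zf_high h hb hm _ _ hm, cn_Zf_high h hb hm _ _ hm]
    exact h.fin y hy

theorem KW.congr {N : ℕ} {a a' : ℕ → KLetter} (e : ∀ j, j < N → a j = a' j) (h : KW N a) :
    KW N a' := by
  constructor
  · intro j hj y hy
    rw [← cn_congr e y j hj, ← cn_congr e A j hj]; exact h.nonneg j hj y hy
  · intro y hy
    rw [← cn_congr e y N le_rfl, ← cn_congr e A N le_rfl]; exact h.fin y hy

theorem tauDown_L {n : ℕ} {a : ℕ → KLetter} {b : ℕ} {x : KLetter} (h : KW (3*n) a)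
    (hb : IsB (3*n) a b x) (m : ℕ) : m < 3 * n →
    tauDown n m (L (3*n) a) = L (3*n) (Zf (3*n) a b x m) := by
  have hpos := hb.pos
  induction m with
  | zero =>
    intro hm
    rw [tauDown]
    apply L_congr
    intro i hi
    by_cases h0 : i = 0
    · subst h0; simp [Zf, a_zero h hm, show 0 < b by omega]
    · simp [Zf, h0]
  | succ m ih =>
    intro hm
    rw [tauDown, ih (by omega)]
    obtain ⟨t1, t2⟩ := tau_L hm (Zf (3*n) a b x m)
    by_cases hmb : m + 1 = b
    · rw [t2]
      · apply L_congr
        intro i hi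
        have hab := hb.ab
        simp only [Zf]
        rcases lt_trichotomy i m with h1 | h1 | h1
        · rw [if_pos h1, if_pos (by omega)]
        · subst h1
          rw [if_neg (by omega), if_pos rfl, if_pos (by omega), if_pos (by omega), proF,
            if_pos hm, if_pos hmb]
        · rw [if_neg (by omega), if_neg (by omega), if_neg (by omega)]
          by_cases h2 : i = m + 1
          · rw [if_pos h2, if_neg (by omega), h2, hmb, hab]
          · rw [if_neg h2]
      · intro hk
        have hx := hb.ne
        have q := hk.nonneg (m+1) (by omega) x hx
        have low : ∀ y, cn (sw m (Zf (3*n) a b x m)) y m = cn (proF (3*n) a b x) y m := by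
          intro y
          rw [← cn_Zf_low (3*n) a b x m y m le_rfl]
          refine cn_congr (N := m) ?_ y m le_rfl
          intro j hj
          simp [sw, show j ≠ m + 1 by omega, show j ≠ m by omega]
        have hm1 : sw m (Zf (3*n) a b x m) m = x := by
          have hab := hb.ab
          rw [sw, if_neg (by omega), if_pos rfl, Zf, if_neg (by omega), if_neg (by omega), hmb, hab]
        rw [cn, cn, low, low, hm1, if_pos rfl, if_neg hx] at q
        have c1 := cn_proF h hb x m (by omega)
        have c2 := cn_proF h hb A m (by omega)
        rw [if_pos (show m < b by omega)] at c1 c2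
        rw [if_neg (Ne.symm hx)] at c1
        rw [if_pos rfl] at c2
        have e := hb.eq
        rw [cn, cn, hb.ab, if_pos rfl, if_neg hx, ← hmb, c1, c2] at e
        omega
    · have key : ∀ i, i < 3 * n → Zf (3*n) a b x (m+1) i = sw m (Zf (3*n) a b x m) i := by
        intro i hi
        simp only [sw]
        rcases lt_trichotomy i m with h1 | h1 | h1
        · rw [if_neg (by omega), if_neg (by omega), Zf, Zf, if_pos (by omega), if_pos h1]
        · subst h1
          rw [if_neg (by omega), if_pos rfl, Zf, Zf, if_pos (by omega), if_neg (by omega),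
            if_neg (by omega), proF, if_pos hm, if_neg hmb]
        · by_cases h2 : i = m + 1
          · subst h2
            simp only [Zf, lt_irrefl, if_true, if_false]
            by_cases h3 : m < b
            · rw [if_pos h3, if_pos (show m + 1 < b by omega)]
            · rw [if_neg h3, if_neg (show ¬ m + 1 < b by omega)]
          · rw [if_neg h2, if_neg (by omega), Zf, Zf, if_neg (by omega), if_neg h2,
              if_neg (by omega), if_neg (by omega)]
      rw [t1 ((kw_Zf h hb hm).congr key), L_congr key]

theorem bump_local {N M : ℕ} {e a : ℕ → KLetter} {b b' : ℕ} {x x' : KLetter}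
    (he : ∀ i, i ≤ M → e i = a i) (hb : IsB N e b x) (hb' : IsB N a b' x') (hM : b ≤ M) :
    b' = b ∧ x' = x := by
  have cc : ∀ y j, j ≤ M + 1 → cn e y j = cn a y j := fun y j hj =>
    cn_congr (N := M+1) (fun i hi => he i (by omega)) y j hj
  have hbb : b' = b := by
    rcases lt_trichotomy b' b with h | h | h
    · exfalso
      have h1 := hb.before (b'+1) (by omega) (by omega) x' hb'.ne
      have h2 := hb'.eq
      rw [cc _ _ (by omega), cc _ _ (by omega)] at h1
      omega
    · exact h
    · exfalso
      have h1 := hb'.before (b+1) (by omega) (by omega) x hb.ne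
      have h2 := hb.eq
      rw [cc _ _ (by omega), cc _ _ (by omega)] at h2
      omega
  refine ⟨hbb, ?_⟩
  rw [← hb.ab, ← hb'.ab, hbb, he b hM]

theorem evacAux_L {n : ℕ} {a : ℕ → ℕ → KLetter} {b : ℕ → ℕ} {x : ℕ → KLetter}
    (h : Seq (3*n) a b x) (j : ℕ) : ∀ k e, j + k + 1 = 3 * n → KW (3*n) e →
    (∀ i, i ≤ j → e i = a k i) → ∃ f, evacAux n j (L (3*n) e) = L (3*n) f ∧
      (∀ i, j < i → f i = e i) ∧
      ∀ i, i ≤ j → f i = if i < b (3*n-1-i) then A else x (3*n-1-i) := by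
  induction j with
  | zero =>
    intro k e hk he hea
    refine ⟨e, rfl, fun _ _ => rfl, ?_⟩
    intro i hi
    have hi0 : i = 0 := by omega
    subst hi0
    have := (h.bp (3*n-1-0)).pos
    rw [if_pos (by omega), a_zero he (by omega)]
  | succ j ih =>
    intro k e hk he hea
    obtain ⟨be, xe, hbe⟩ := exists_bump he (by omega)
    have hbk := h.bp k
    have loc1 : be ≤ j + 1 → b k = be ∧ x k = xe := bump_local hea hbe hbk
    have loc2 : b k ≤ j + 1 → be = b k ∧ xe = x k :=
      bump_local (fun i hi => (hea i hi).symm) hbk hbe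
    rw [evacAux, tauDown_L he hbe (j+1) (by omega)]
    obtain ⟨f, f1, f2, f3⟩ := ih (k+1) _ (by omega) (kw_Zf he hbe (m := j+1) (by omega)) (by
      intro i hi
      rw [h.pr k i (by omega), Zf, if_pos (by omega), proF, proF,
        if_pos (show i + 1 < 3 * n by omega), if_pos (show i + 1 < 3 * n by omega), hea (i+1) (by omega)]
      by_cases hc : i + 1 = be
      · rw [if_pos hc, if_pos]
        have := loc1 (by omega)
        omega
      · rw [if_neg hc, if_neg]
        intro hc'
        have := loc2 (by omega)
        omega)
    refine ⟨f, f1, ?_, ?_⟩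
    · intro i hi
      rw [f2 i (by omega), Zf, if_neg (by omega), if_neg (by omega)]
    · intro i hi
      by_cases hij : i = j + 1
      · subst hij
        rw [f2 _ (by omega), Zf, if_neg (by omega), if_pos rfl]
        have : 3 * n - 1 - (j+1) = k := by omega
        rw [this]
        by_cases hc : j + 1 < be
        · rw [if_pos hc, if_pos]
          by_contra hc'
          have := loc2 (by omega)
          omega
        · have := loc1 (by omega)
          rw [if_neg hc, if_neg (by omega), this.2]
      · exact f3 i (by omega)

/-- final comparison of letters -/
theorem label_eq {N : ℕ} {a : ℕ → ℕ → KLetter} {b : ℕ → ℕ} {x : ℕ → KLetter}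
    (h : Seq N a b x) (ha : ∀ k, a (k+1) = proF N (a k) (b k) (x k)) (k : ℕ) (hk : k < N) :
    (if N - 1 - k < b k then A else x k) = a 0 ((b k + k) % N) := by
  have hlt := (h.bp k).lt
  by_cases hc : b k + k < N
  · rw [if_neg (by omega), Nat.mod_eq_of_lt hc]
    have back : ∀ k i, i + k < N → a k i ≠ A → a 0 (i + k) = a k i := by
      intro k
      induction k with
      | zero => intro i _ _; rfl
      | succ k ih =>
        intro i hi hA
        rw [h.pr k i (by omega), proF, if_pos (by omega)] at hA ⊢
        by_cases hb : i + 1 = b k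
        · rw [if_pos hb] at hA; exact absurd rfl hA
        · rw [if_neg hb] at hA ⊢
          rw [← ih (i+1) (by omega) hA]
          congr 1; omega
    rw [back k (b k) hc (by rw [(h.bp k).ab]; exact (h.bp k).ne), (h.bp k).ab]
  · rw [if_pos (by omega), Nat.mod_eq_sub_mod (by omega), Nat.mod_eq_of_lt (by omega)]
    obtain ⟨q, hq⟩ : ∃ q, b k + k = q + N := ⟨b k + k - N, by omega⟩
    rw [hq, Nat.add_sub_cancel]
    by_contra hA
    have fw : ∀ t, t ≤ q → a t (q - t) = a 0 q ∨ ∃ i, i < t ∧ b i + i = q := by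
      intro t
      induction t with
      | zero => intro _; left; rfl
      | succ t ih =>
        intro ht
        rcases ih (by omega) with e | ⟨i, hi, e⟩
        · by_cases hb : q - (t+1) + 1 = b t
          · right; exact ⟨t, by omega, by omega⟩
          · left
            rw [h.pr t _ (by omega), proF, if_pos (by omega), if_neg hb, ← e]
            congr 1; omega
        · right; exact ⟨i, by omega, e⟩
    obtain ⟨i, hi, e⟩ : ∃ i, i < q ∧ b i + i = q := by
      rcases fw q le_rfl with e | e
      · rw [Nat.sub_self, a_zero (h.kw q) (by omega)] at e
        exact absurd e hA
      · exact e
    have st : ∀ s, k + 1 + s ≤ i + N → a (k+1+s) (q + N - (k+1+s)) = A := by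
      intro s
      induction s with
      | zero =>
        intro _
        have hp := (h.bp k).pos
        rw [Nat.add_zero, h.pr k _ (by omega), proF, if_pos (by omega), if_pos (by omega)]
      | succ s ih =>
        intro hs
        have e0 := ih (by omega)
        have : k + 1 + (s+1) = (k + 1 + s) + 1 := by omega
        rw [this, h.pr (k+1+s) _ (by omega), proF, if_pos (by omega)]
        split_ifs
        · rfl
        · rw [← e0]; congr 1; omega
    obtain ⟨s, hs⟩ : ∃ s, k + 1 + s = i + N := ⟨i + N - (k+1), by omega⟩
    have f := st s (by omega)
    rw [hs] at f
    have hb := h.bp (i+N)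
    have per := seq_period h ha i
    have : q + N - (i + N) = b (i+N) := by omega
    rw [this, hb.ab] at f
    exact hb.ne f

theorem exists_seq {N : ℕ} (hN : 0 < N) (a₀ : ℕ → KLetter) (h : KW N a₀) :
    ∃ (a : ℕ → ℕ → KLetter) (b : ℕ → ℕ) (x : ℕ → KLetter), a 0 = a₀ ∧ Seq N a b x ∧
      ∀ k, a (k+1) = proF N (a k) (b k) (x k) := by
  have hex : ∀ z : {z : ℕ → KLetter // KW N z}, ∃ p : ℕ × KLetter, IsB N z.1 p.1 p.2 := by
    intro z
    obtain ⟨b, x, hb⟩ := exists_bump z.2 hN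
    exact ⟨(b, x), hb⟩
  choose p hp using hex
  let s : ℕ → {z : ℕ → KLetter // KW N z} := fun k =>
    Nat.rec ⟨a₀, h⟩ (fun _ z => ⟨proF N z.1 (p z).1 (p z).2, kw_proF z.2 (hp z)⟩) k
  refine ⟨fun k => (s k).1, fun k => (p (s k)).1, fun k => (p (s k)).2, rfl,
    ⟨fun k => (s k).2, fun k => hp (s k), fun k j _ => rfl⟩, fun k => rfl⟩

theorem main (n : ℕ) (w : List KLetter) (hw : IsKrewerasWord n w) (i : ℕ) (h1 : 1 ≤ i)
    (h2 : i ≤ 3 * n) :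
    (evac n w).getD (i - 1) KLetter.A =
      w.getD (ksigma n w (3 * n + 1 - i) - 1) KLetter.A := by
  have hlen : w.length = 3 * n := hw.1
  have hL := L_self w
  rw [hlen] at hL
  generalize hz : (fun i => w.getD i A) = a₀ at hL
  have hk : KW (3*n) a₀ := by rw [← isK_iff, hL]; exact hw
  obtain ⟨a, b, x, h0, hs, ha⟩ := exists_seq (by omega) a₀ hk
  have hpro : ∀ k, pro^[k] w = L (3*n) (a k) := by
    intro k
    induction k with
    | zero => rw [h0, hL]; rfl
    | succ k ih => rw [Function.iterate_succ_apply', ih, pro_L (hs.bp k), ha k]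
  obtain ⟨f, f1, _, f3⟩ := evacAux_L hs (3*n-1) 0 a₀ (by omega) hk (fun i _ => by rw [h0])
  have e1 : evac n w = L (3*n) f := by rw [evac, ← f1, hL]
  rw [e1, L_getD _ (by omega), f3 (i-1) (by omega)]
  obtain ⟨k, hki⟩ : ∃ k, k + i = 3 * n := ⟨3*n - i, by omega⟩
  have hk1 : 3 * n - 1 - (i - 1) = k := by omega
  have hk2 : 3 * n + 1 - i = k + 1 := by omega
  have hk3 : i - 1 = 3 * n - 1 - k := by omega
  rw [hk1, hk2, hk3, label_eq hs ha k (by omega), ksigma, Nat.add_sub_cancel, Nat.add_sub_cancel,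
    hpro, kiota_L (hs.bp k), h0, ← hz]
  have : b k + 1 + (k + 1) - 2 = b k + k := by omega
  rw [this]

end KWP

/-- `evac(w) = (w_{σ_w(3n)}, w_{σ_w(3n-1)}, …, w_{σ_w(1)})`: for every
`i ∈ {1, …, 3n}`, the letter of `evac(w)` in position `i` equals `w_{σ_w(3n+1-i)}`
(letters are 1-indexed). -/
theorem evac_via_ksigma (n : ℕ) (w : List KLetter) (hw : IsKrewerasWord n w) :
    ∀ i : ℕ, 1 ≤ i → i ≤ 3 * n →
      (evac n w).getD (i - 1) KLetter.A =
        w.getD (ksigma n w (3 * n + 1 - i) - 1) KLetter.A := by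
  intro i h1 h2
  exact KWP.main n w hw i h1 h2
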